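/- arXiv:2001.04229 — 4 statements merged into one kernel-verified Lean document; each statement's English description precedes it below -/
import Mathlib

section
/- Let F be a nonempty compact subset of ℝ^t, let f₁, …, f_N : ℝ^t → ℝ be continuous functions, and let d ∈ ℝ^N be a disagreement point such that there exists x ∈ F with fₙ(x) > dₙ for every n. Then the Nash product x ↦ ∏ₙ (fₙ(x) − dₙ) attains its maximum over the set K = {x ∈ F : fₙ(x) ≥ dₙ for all n}, and every maximizer x* of the Nash product over K satisfies fₙ(x*) > dₙ for all n. -/
/-!
The feasible set `{x ∈ F | ∀ n, d n ≤ f n x}` is a closed subset of the compact set `F`, hence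
compact, and the point supplied by `hpos` lies in it; the Nash product is continuous, so the extreme
value theorem gives a maximizer. At the point from `hpos` all factors are positive, so the maximum is positive,
whereas a feasible point with `f n x = d n` for some `n` has Nash product zero.
-/

/-- For a nonempty compact set `F ⊆ ℝ^t`, continuous functions
`f₁, …, f_N : ℝ^t → ℝ` and a disagreement point `d ∈ ℝ^N` such that some `x ∈ F`
satisfies `fₙ(x) > dₙ` for all `n`, the Nash product `x ↦ ∏ₙ (fₙ(x) − dₙ)` attains
its maximum over `K = {x ∈ F : fₙ(x) ≥ dₙ ∀ n}`, and every maximizer `x*` over `K`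
satisfies `fₙ(x*) > dₙ` for all `n`. -/
theorem nash_product_attains_max_and_maximizers_strict
    {t N : ℕ} (F : Set (Fin t → ℝ)) (hFne : F.Nonempty) (hFcp : IsCompact F)
    (f : Fin N → (Fin t → ℝ) → ℝ) (hf : ∀ n, Continuous (f n))
    (d : Fin N → ℝ) (hpos : ∃ x ∈ F, ∀ n, d n < f n x) :
    (∃ x ∈ {x ∈ F | ∀ n, d n ≤ f n x},
        ∀ y ∈ {x ∈ F | ∀ n, d n ≤ f n x},
          ∏ n, (f n y - d n) ≤ ∏ n, (f n x - d n)) ∧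
    (∀ x ∈ {x ∈ F | ∀ n, d n ≤ f n x},
        (∀ y ∈ {x ∈ F | ∀ n, d n ≤ f n x},
          ∏ n, (f n y - d n) ≤ ∏ n, (f n x - d n)) →
        ∀ n, d n < f n x) := by
  obtain ⟨x₀, hx₀F, hx₀⟩ := hpos
  have hx₀K : x₀ ∈ {x ∈ F | ∀ n, d n ≤ f n x} := ⟨hx₀F, fun n => (hx₀ n).le⟩
  refine ⟨?_, ?_⟩
  · have hclosed : IsClosed {x | ∀ n, d n ≤ f n x} := by
      simp only [Set.ofPred_forall]
      exact isClosed_iInter fun n => isClosed_le continuous_const (hf n)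
    have hcompact : IsCompact {x ∈ F | ∀ n, d n ≤ f n x} := hFcp.inter_right hclosed
    have hcont : Continuous fun x => ∏ n, (f n x - d n) :=
      continuous_finsetProd _ fun n _ => (hf n).sub continuous_const
    exact hcompact.exists_isMaxOn ⟨x₀, hx₀K⟩ hcont.continuousOn
  · intro x hx hmax n
    refine lt_of_le_of_ne (hx.2 n) fun heq => ?_
    have hzero : ∏ n, (f n x - d n) = 0 :=
      Finset.prod_eq_zero (Finset.mem_univ n) (sub_eq_zero.2 heq.symm)
    have hprod_pos : 0 < ∏ n, (f n x₀ - d n) :=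
      Finset.prod_pos fun n _ => sub_pos.2 (hx₀ n)
    exact (hprod_pos.trans_le (hmax x₀ hx₀K)).ne' hzero
end

section
/- Let S ⊆ ℝ² be a convex and compact set and let d = (d₁, d₂) ∈ S be such that there exists s ∈ S with s₁ > d₁ and s₂ > d₂. Then the function (s₁, s₂) ↦ (s₁ − d₁)(s₂ − d₂) has a unique maximizer over the set {s ∈ S : s₁ ≥ d₁, s₂ ≥ d₂}, and this maximizer s* satisfies s*₁ > d₁ and s*₂ > d₂. -/
/-!
The constrained feasible set is compact and nonempty, so the Nash product attains its maximum there;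
the feasible point strictly above `d` shows that the maximum `M` is positive, which forces both
gains of any maximizer to be positive. If `(a, b)` and `(c, e)` are the gains of two maximizers,
convexity makes their midpoint feasible, so `(a + c)(b + e) ≤ 4M`, that is, `(a - c)(b - e) ≥ 0`.
Hence one maximizer weakly dominates the other, and since both products equal `M > 0` they coincide.
-/

/-- Two positive gain pairs with the same product coincide as soon as the product at their midpoint
is no larger: the midpoint inequality says that the pairs are comparable coordinatewise. -/
lemma eq_of_mul_eq_of_midpoint_le {a b c e : ℝ} (ha : 0 < a) (hb : 0 < b) (hc : 0 < c)
    (he : 0 < e) (h : a * b = c * e) (hm : (a + c) / 2 * ((b + e) / 2) ≤ a * b) :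
    a = c ∧ b = e := by
  have hcomp : 0 ≤ (a - c) * (b - e) := by nlinarith
  have hac : a = c := by
    rcases lt_trichotomy a c with hlt | heq | hgt
    · have hbe : b ≤ e := by
        by_contra! hlt'
        nlinarith [mul_pos (sub_pos.2 hlt) (sub_pos.2 hlt')]
      nlinarith [mul_pos (sub_pos.2 hlt) hb, mul_nonneg hc.le (sub_nonneg.2 hbe)]
    · exact heq
    · have hbe : e ≤ b := by
        by_contra! hlt'
        nlinarith [mul_pos (sub_pos.2 hgt) (sub_pos.2 hlt')]
      nlinarith [mul_pos (sub_pos.2 hgt) he, mul_nonneg ha.le (sub_nonneg.2 hbe)]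
  subst hac
  exact ⟨rfl, mul_left_cancel₀ ha.ne' h⟩

/-- For a convex compact `S ⊆ ℝ²` with disagreement point `d ∈ S`
such that some `s ∈ S` satisfies `s₁ > d₁` and `s₂ > d₂`, the Nash product
`(s₁ − d₁)(s₂ − d₂)` has a unique maximizer over `{s ∈ S : s₁ ≥ d₁, s₂ ≥ d₂}`,
and this maximizer satisfies the strict inequalities. -/
theorem nash_bargaining_two_player
    (S : Set (ℝ × ℝ)) (hconv : Convex ℝ S) (hcp : IsCompact S)
    (d : ℝ × ℝ) (hd : d ∈ S) (hpos : ∃ s ∈ S, d.1 < s.1 ∧ d.2 < s.2) :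
    (∃! s : ℝ × ℝ, s ∈ {s ∈ S | d.1 ≤ s.1 ∧ d.2 ≤ s.2} ∧
        ∀ y ∈ {s ∈ S | d.1 ≤ s.1 ∧ d.2 ≤ s.2},
          (y.1 - d.1) * (y.2 - d.2) ≤ (s.1 - d.1) * (s.2 - d.2)) ∧
    (∀ s : ℝ × ℝ, s ∈ {s ∈ S | d.1 ≤ s.1 ∧ d.2 ≤ s.2} →
        (∀ y ∈ {s ∈ S | d.1 ≤ s.1 ∧ d.2 ≤ s.2},
          (y.1 - d.1) * (y.2 - d.2) ≤ (s.1 - d.1) * (s.2 - d.2)) →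
        d.1 < s.1 ∧ d.2 < s.2) := by
  obtain ⟨p, hpS, hp1, hp2⟩ := hpos
  have hpos : ∀ s : ℝ × ℝ, s ∈ {s ∈ S | d.1 ≤ s.1 ∧ d.2 ≤ s.2} →
      (∀ y ∈ {s ∈ S | d.1 ≤ s.1 ∧ d.2 ≤ s.2},
        (y.1 - d.1) * (y.2 - d.2) ≤ (s.1 - d.1) * (s.2 - d.2)) →
      d.1 < s.1 ∧ d.2 < s.2 := by
    rintro s ⟨-, h1, h2⟩ hmax
    have hM : 0 < (s.1 - d.1) * (s.2 - d.2) :=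
      (mul_pos (sub_pos.2 hp1) (sub_pos.2 hp2)).trans_le (hmax p ⟨hpS, hp1.le, hp2.le⟩)
    exact ⟨sub_pos.1 (pos_of_mul_pos_left hM (sub_nonneg.2 h2)),
      sub_pos.1 (pos_of_mul_pos_right hM (sub_nonneg.2 h1))⟩
  refine ⟨?_, hpos⟩
  have hK : IsCompact {s ∈ S | d.1 ≤ s.1 ∧ d.2 ≤ s.2} :=
    hcp.inter_right ((isClosed_le continuous_const continuous_fst).inter
      (isClosed_le continuous_const continuous_snd))
  obtain ⟨s, hs, hmax⟩ := hK.exists_isMaxOn ⟨p, hpS, hp1.le, hp2.le⟩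
    (f := fun y : ℝ × ℝ => (y.1 - d.1) * (y.2 - d.2)) (by fun_prop)
  have hmax' : ∀ y ∈ {s ∈ S | d.1 ≤ s.1 ∧ d.2 ≤ s.2},
      (y.1 - d.1) * (y.2 - d.2) ≤ (s.1 - d.1) * (s.2 - d.2) := fun y hy => hmax hy
  refine ⟨s, ⟨hs, hmax'⟩, ?_⟩
  rintro t ⟨ht, htmax⟩
  obtain ⟨hs1, hs2⟩ := hpos s hs hmax'
  obtain ⟨ht1, ht2⟩ := hpos t ht htmax
  have hmid : ((1 / 2 : ℝ) • t + (1 / 2 : ℝ) • s) ∈ S :=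
    hconv ht.1 hs.1 (by norm_num) (by norm_num) (by norm_num)
  have hle := htmax _ ⟨hmid, by simp; linarith, by simp; linarith⟩
  simp only [Prod.fst_add, Prod.snd_add, Prod.smul_fst, Prod.smul_snd, smul_eq_mul] at hle
  obtain ⟨h1, h2⟩ := eq_of_mul_eq_of_midpoint_le (sub_pos.2 ht1) (sub_pos.2 ht2) (sub_pos.2 hs1)
    (sub_pos.2 hs2) (le_antisymm (hmax' t ht) (htmax s hs)) (by convert hle using 2 <;> ring)
  exact Prod.ext (by linarith) (by linarith)
end

section
/- Let S ⊆ ℝ^N be a convex and compact set and let d ∈ S be such that there exists s ∈ S with sₙ > dₙ for every n ∈ {1, …, N}. Then the function s ↦ ∏ₙ (sₙ − dₙ) has a unique maximizer over the set {s ∈ S : sₙ ≥ dₙ for all n}, and this maximizer s* satisfies s*ₙ > dₙ for all n. -/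
/-!
A maximizer exists because the feasible set, the intersection of `S` with the closed orthant above
`d`, is compact and contains `d`, and the Nash product is continuous. The product is positive at
the given strictly dominating point, so it cannot vanish at a maximizer: every maximizer strictly
dominates `d`. For uniqueness, the AM-GM inequality `a * b < ((a + b) / 2) ^ 2` for `a ≠ b`,
multiplied over the coordinates (`prod_mul_prod_lt_sq_prod_midpoint`), shows that the midpoint of
two distinct maximizers would have a strictly larger Nash product.
-/

/-- The Nash product is strictly midpoint log-concave on the open orthant above `d`. -/
theorem prod_mul_prod_lt_sq_prod_midpoint {N : ℕ} (d s t : Fin N → ℝ)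
    (hs : ∀ n, d n < s n) (ht : ∀ n, d n < t n) (hne : s ≠ t) :
    (∏ n, (s n - d n)) * ∏ n, (t n - d n) < (∏ n, (midpoint ℝ s t n - d n)) ^ 2 := by
  have hmid : ∀ n, midpoint ℝ s t n = (s n + t n) / 2 := by
    intro n
    simp [midpoint_eq_smul_add]
    ring
  rw [← Finset.prod_mul_distrib, ← Finset.prod_pow]
  obtain ⟨k, hk⟩ := Function.ne_iff.mp hne
  refine Finset.prod_lt_prod (fun n _ => mul_pos (sub_pos.mpr (hs n)) (sub_pos.mpr (ht n)))
    (fun n _ => ?_) ⟨k, Finset.mem_univ k, ?_⟩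
  · rw [hmid]
    nlinarith [sq_nonneg (s n - t n)]
  · rw [hmid]
    nlinarith [sq_pos_of_ne_zero (sub_ne_zero.mpr hk)]

/-- For a convex compact `S ⊆ ℝ^N` with disagreement point `d ∈ S`
such that some `s ∈ S` satisfies `sₙ > dₙ` for all `n`, the Nash product
`∏ₙ (sₙ − dₙ)` has a unique maximizer over `{s ∈ S : sₙ ≥ dₙ ∀ n}`, and this
maximizer satisfies `s*ₙ > dₙ` for all `n`. -/
theorem nash_bargaining_N_player
    {N : ℕ} (S : Set (Fin N → ℝ)) (hconv : Convex ℝ S) (hcp : IsCompact S)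
    (d : Fin N → ℝ) (hd : d ∈ S) (hpos : ∃ s ∈ S, ∀ n, d n < s n) :
    (∃! s : Fin N → ℝ, s ∈ {s ∈ S | ∀ n, d n ≤ s n} ∧
        ∀ y ∈ {s ∈ S | ∀ n, d n ≤ s n},
          ∏ n, (y n - d n) ≤ ∏ n, (s n - d n)) ∧
    (∀ s : Fin N → ℝ, s ∈ {s ∈ S | ∀ n, d n ≤ s n} →
        (∀ y ∈ {s ∈ S | ∀ n, d n ≤ s n},
          ∏ n, (y n - d n) ≤ ∏ n, (s n - d n)) →
        ∀ n, d n < s n) := by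
  obtain ⟨s₀, hs₀, hs₀d⟩ := hpos
  have hpos' : ∀ s : Fin N → ℝ, s ∈ {s ∈ S | ∀ n, d n ≤ s n} →
      (∀ y ∈ {s ∈ S | ∀ n, d n ≤ s n}, ∏ n, (y n - d n) ≤ ∏ n, (s n - d n)) →
      ∀ n, d n < s n := by
    intro s hs hmax n
    refine lt_of_le_of_ne (hs.2 n) fun h => ?_
    have h0 : ∏ n, (s n - d n) = 0 :=
      Finset.prod_eq_zero (Finset.mem_univ n) (by rw [h, sub_self])
    have h1 : 0 < ∏ n, (s₀ n - d n) :=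
      Finset.prod_pos fun i _ => sub_pos.mpr (hs₀d i)
    have h2 := hmax s₀ ⟨hs₀, fun i => (hs₀d i).le⟩
    linarith
  refine ⟨?_, hpos'⟩
  have hK : IsCompact {s ∈ S | ∀ n, d n ≤ s n} := hcp.inter_right isClosed_Ici
  have hcont : Continuous fun s : Fin N → ℝ => ∏ n, (s n - d n) := by fun_prop
  obtain ⟨s, hs, hmax⟩ := hK.exists_isMaxOn ⟨d, hd, fun n => le_rfl⟩ hcont.continuousOn
  refine ⟨s, ⟨hs, fun y hy => hmax hy⟩, ?_⟩
  rintro t ⟨ht, htmax⟩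
  by_contra hne
  have hmid : midpoint ℝ t s ∈ {s ∈ S | ∀ n, d n ≤ s n} :=
    (hconv.inter (convex_Ici d)).midpoint_mem ht hs
  have hts := prod_mul_prod_lt_sq_prod_midpoint d t s
    (hpos' t ht htmax) (hpos' s hs fun y hy => hmax hy) hne
  have heq : ∏ n, (t n - d n) = ∏ n, (s n - d n) :=
    le_antisymm (hmax ht) (htmax s hs)
  have hle : ∏ n, (midpoint ℝ t s n - d n) ≤ ∏ n, (s n - d n) := hmax hmid
  have h0 : 0 ≤ ∏ n, (midpoint ℝ t s n - d n) :=
    Finset.prod_nonneg fun n _ => sub_nonneg.mpr (hmid.2 n)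
  rw [heq] at hts
  nlinarith
end

section
/- Let S ⊆ ℝ^N be convex and compact, d ∈ S with some s ∈ S satisfying s > d componentwise, and let s* be the unique maximizer of ∏ₙ (sₙ − dₙ) over {s ∈ S : s ≥ d}. Let γ ∈ ℝ^N with γₙ > 0 for all n and ζ ∈ ℝ^N, and define the affine map T(s) = (γ₁s₁ + ζ₁, …, γ_N s_N + ζ_N). Then T(S) is convex and compact, T(d) ∈ T(S), there exists s' ∈ T(S) with s' > T(d) componentwise, and T(s*) is the unique maximizer of ∏ₙ (sₙ − T(d)ₙ) over {s ∈ T(S) : s ≥ T(d)}. (Invariance of the Nash bargaining solution to equivalent utility representations.) -/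
/-!
Write `T s n = γ n * s n + ζ n`. Since `γ n > 0`, the map `T` preserves and reflects the
coordinatewise orders, and `∏ (T s n - T d n) = (∏ γ n) * ∏ (s n - d n)`: the Nash product is
scaled by one positive constant. Hence `s` maximizes the Nash product over the feasible part of
`S` exactly when `T s` does so over the feasible part of `T '' S`, and uniqueness transfers as
well. Convexity and compactness hold because `T` is affine and continuous.
-/

/-- Invariance to equivalent utility representations: If `s*` is
the unique maximizer of the Nash product over `{s ∈ S : s ≥ d}` and
`T(s)ₙ = γₙ sₙ + ζₙ` with `γₙ > 0`, then `T(S)` is convex and compact,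
`T(d) ∈ T(S)`, there is `s' ∈ T(S)` strictly dominating `T(d)`, and `T(s*)`
is the unique maximizer of the Nash product of the transformed problem. -/
theorem nash_bargaining_invariance_affine
    {N : ℕ} (S : Set (Fin N → ℝ)) (hconv : Convex ℝ S) (hcp : IsCompact S)
    (d : Fin N → ℝ) (hd : d ∈ S) (hpos : ∃ s ∈ S, ∀ n, d n < s n)
    (γ ζ : Fin N → ℝ) (hγ : ∀ n, 0 < γ n)
    (T : (Fin N → ℝ) → (Fin N → ℝ)) (hT : ∀ s n, T s n = γ n * s n + ζ n)
    (sstar : Fin N → ℝ)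
    (hmem : sstar ∈ {s ∈ S | ∀ n, d n ≤ s n})
    (hmax : ∀ y ∈ {s ∈ S | ∀ n, d n ≤ s n},
        ∏ n, (y n - d n) ≤ ∏ n, (sstar n - d n))
    (huniq : ∀ s ∈ {s ∈ S | ∀ n, d n ≤ s n},
        (∀ y ∈ {s ∈ S | ∀ n, d n ≤ s n},
          ∏ n, (y n - d n) ≤ ∏ n, (s n - d n)) → s = sstar) :
    Convex ℝ (T '' S) ∧ IsCompact (T '' S) ∧ T d ∈ T '' S ∧
    (∃ s' ∈ T '' S, ∀ n, T d n < s' n) ∧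
    (T sstar ∈ {s ∈ T '' S | ∀ n, T d n ≤ s n} ∧
      (∀ y ∈ {s ∈ T '' S | ∀ n, T d n ≤ s n},
        ∏ n, (y n - T d n) ≤ ∏ n, (T sstar n - T d n)) ∧
      (∀ s ∈ {s ∈ T '' S | ∀ n, T d n ≤ s n},
        (∀ y ∈ {s ∈ T '' S | ∀ n, T d n ≤ s n},
          ∏ n, (y n - T d n) ≤ ∏ n, (s n - T d n)) → s = T sstar)) := by
  have hle : ∀ a b : Fin N → ℝ, (∀ n, T a n ≤ T b n) ↔ ∀ n, a n ≤ b n := fun a b =>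
    forall_congr' fun n => by
      rw [hT, hT, add_le_add_iff_right, mul_le_mul_iff_right₀ (hγ n)]
  have hΓ : 0 < ∏ n, γ n := Finset.prod_pos fun n _ => hγ n
  have hprod : ∀ a : Fin N → ℝ,
      ∏ n, (T a n - T d n) = (∏ n, γ n) * ∏ n, (a n - d n) := fun a => by
    rw [← Finset.prod_mul_distrib]
    refine Finset.prod_congr rfl fun n _ => ?_
    rw [hT, hT]; ring
  refine ⟨?_, ?_, Set.mem_image_of_mem T hd, ?_, ?_, ?_, ?_⟩
  · rintro _ ⟨x, hx, rfl⟩ _ ⟨y, hy, rfl⟩ a b ha hb hab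
    refine ⟨a • x + b • y, hconv hx hy ha hb hab, ?_⟩
    ext n
    simp only [hT, Pi.add_apply, Pi.smul_apply, smul_eq_mul]
    linear_combination (-ζ n) * hab
  · refine hcp.image (continuous_pi fun n => ?_)
    simp only [hT]
    fun_prop
  · obtain ⟨s, hs, hlt⟩ := hpos
    refine ⟨T s, Set.mem_image_of_mem T hs, fun n => ?_⟩
    rw [hT, hT]
    have := mul_lt_mul_of_pos_left (hlt n) (hγ n)
    linarith
  · exact ⟨Set.mem_image_of_mem T hmem.1, (hle d sstar).2 hmem.2⟩
  · rintro _ ⟨⟨y, hy, rfl⟩, hdy⟩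
    rw [hprod, hprod]
    exact mul_le_mul_of_nonneg_left (hmax y ⟨hy, (hle d y).1 hdy⟩) hΓ.le
  · rintro _ ⟨⟨s, hs, rfl⟩, hds⟩ h
    refine congrArg T (huniq s ⟨hs, (hle d s).1 hds⟩ fun y hy => ?_)
    have hTy := h (T y) ⟨Set.mem_image_of_mem T hy.1, (hle d y).2 hy.2⟩
    rw [hprod, hprod] at hTy
    exact le_of_mul_le_mul_left hTy hΓ
end
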